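/- arXiv:1805.03978 — 9 statements merged into one kernel-verified Lean document; each statement's English description precedes it below -/
import Mathlib

section
/- Let n ≥ 2, let Ω ⊆ ℝⁿ be open, let τ ∈ ℝ, α, β : Fin n → ℝ, and let Φ, F : ℝ → ℝ be smooth. If Φ and F satisfy the reduced ODE system at every s in the image q(Ω), then the functions φ = Φ ∘ q and f = F ∘ q satisfy the conformal soliton system on Ω. (This is the 'if' direction of Theorem 1.2.) -/
/-!
The proof is the chain rule. With `p i = 2 τ (ε i) (x i) + α i = ∂ᵢq`, one has
`∂ᵢ(G ∘ q) = G'(q) p i` and `∂ᵢ∂ⱼ(G ∘ q) = G''(q) (p i) (p j) + 2 τ (ε i) δᵢⱼ G'(q)`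
(`pd_comp_quad`, `pd_pd_comp_quad`). The off-diagonal equations are then `(p i) (p j)` times the
first reduced equation. In the diagonal ones the bracket is `(p i)²` times the first equation plus
terms in `2 τ (ε i)`, and since `(ε k)² = 1` the sum over `k` is governed by
`∑ₖ ε k (p k)² = 4 τ q + Λ` (`sum_sign_mul_sq`), which leaves `ε i` times the second equation.
-/

noncomputable def pd {n : ℕ} (i : Fin n) (u : (Fin n → ℝ) → ℝ) (x : Fin n → ℝ) : ℝ :=
  fderiv ℝ u x (Pi.single i 1)

/-- The PDE system characterizing gradient Ricci solitons conformal to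
pseudo-Euclidean space (Barbosa–Pina–Tenenblat). -/
def SolitonSystem (n : ℕ) (ε : Fin n → ℝ) (Ω : Set (Fin n → ℝ))
    (φ f : (Fin n → ℝ) → ℝ) (lam : ℝ) : Prop :=
  (∀ i j : Fin n, i ≠ j → ∀ x ∈ Ω,
    ((n : ℝ) - 2) * pd i (pd j φ) x + φ x * pd i (pd j f) x
      + pd i φ x * pd j f x + pd j φ x * pd i f x = 0) ∧
  (∀ i : Fin n, ∀ x ∈ Ω,
    φ x * (((n : ℝ) - 2) * pd i (pd i φ) x + φ x * pd i (pd i f) x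
        + 2 * pd i φ x * pd i f x)
      + ε i * ∑ k, ε k * (φ x * pd k (pd k φ) x - ((n : ℝ) - 1) * (pd k φ x) ^ 2
        - φ x * pd k φ x * pd k f x) = ε i * lam)

/-- The reduced ODE system. -/
def ReducedODE (n : ℕ) (τ Λ lam : ℝ) (Φ F : ℝ → ℝ) (s : ℝ) : Prop :=
  ((n : ℝ) - 2) * deriv (deriv Φ) s + Φ s * deriv (deriv F) s
      + 2 * deriv Φ s * deriv F s = 0 ∧
  2 * τ * Φ s * (2 * ((n : ℝ) - 1) * deriv Φ s + Φ s * deriv F s)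
    + (Φ s * deriv (deriv Φ) s - ((n : ℝ) - 1) * (deriv Φ s) ^ 2
      - Φ s * deriv Φ s * deriv F s) * (4 * τ * s + Λ) = lam

theorem hasFDerivAt_quad {n : ℕ} {τ : ℝ} {ε α β : Fin n → ℝ} {q : (Fin n → ℝ) → ℝ}
    (hq : ∀ x, q x = ∑ k, (τ * ε k * (x k) ^ 2 + α k * x k + β k)) (x : Fin n → ℝ) :
    HasFDerivAt q (∑ k, (2 * τ * ε k * x k + α k) •
      (ContinuousLinearMap.proj k : (Fin n → ℝ) →L[ℝ] ℝ)) x := by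
  rw [funext hq]
  refine HasFDerivAt.fun_sum fun k _ => ?_
  have hk : HasFDerivAt (fun y : Fin n → ℝ => y k)
      (ContinuousLinearMap.proj k : (Fin n → ℝ) →L[ℝ] ℝ) x := hasFDerivAt_apply k x
  have hd : HasDerivAt (fun t : ℝ => τ * ε k * t ^ 2 + α k * t + β k)
      (2 * τ * ε k * x k + α k) (x k) := by
    have h := ((((hasDerivAt_id (x k)).pow 2).const_mul (τ * ε k)).add
      ((hasDerivAt_id (x k)).const_mul (α k))).add_const (β k)
    refine h.congr_deriv ?_
    simp
    ring
  exact hd.comp_hasFDerivAt x hk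

theorem pd_comp_quad {n : ℕ} {τ : ℝ} {ε α β : Fin n → ℝ} {q : (Fin n → ℝ) → ℝ}
    (hq : ∀ x, q x = ∑ k, (τ * ε k * (x k) ^ 2 + α k * x k + β k))
    {G : ℝ → ℝ} (hG : Differentiable ℝ G) (i : Fin n) (x : Fin n → ℝ) :
    pd i (G ∘ q) x = deriv G (q x) * (2 * τ * ε i * x i + α i) := by
  have h := (hG (q x)).hasDerivAt.comp_hasFDerivAt x (hasFDerivAt_quad hq x)
  rw [pd, h.fderiv]
  simp [Pi.single_apply]

theorem pd_pd_comp_quad {n : ℕ} {τ : ℝ} {ε α β : Fin n → ℝ} {q : (Fin n → ℝ) → ℝ}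
    (hq : ∀ x, q x = ∑ k, (τ * ε k * (x k) ^ 2 + α k * x k + β k))
    {G : ℝ → ℝ} (hG : ContDiff ℝ (⊤ : ℕ∞) G) (i j : Fin n) (x : Fin n → ℝ) :
    pd i (pd j (G ∘ q)) x =
      deriv (deriv G) (q x) * (2 * τ * ε i * x i + α i) * (2 * τ * ε j * x j + α j)
        + if i = j then 2 * τ * ε i * deriv G (q x) else 0 := by
  have hG' : Differentiable ℝ (deriv G) :=
    (contDiff_infty_iff_deriv.1 hG).2.differentiable (by simp)
  rw [funext (pd_comp_quad hq (hG.differentiable (by simp)) j)]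
  have h1 := (hG' (q x)).hasDerivAt.comp_hasFDerivAt x (hasFDerivAt_quad hq x)
  have hj : HasFDerivAt (fun y : Fin n → ℝ => y j)
      (ContinuousLinearMap.proj j : (Fin n → ℝ) →L[ℝ] ℝ) x := hasFDerivAt_apply j x
  have h := h1.mul ((hj.const_mul (2 * τ * ε j)).add_const (α j))
  have h' : HasFDerivAt (fun y => deriv G (q y) * (2 * τ * ε j * y j + α j)) _ x := h
  rw [pd, h'.fderiv]
  by_cases hij : i = j
  · subst hij
    simp [Pi.single_apply]
    ring
  · simp [Pi.single_apply, hij, Ne.symm hij]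
    ring

/-- The pseudo-Euclidean square of the gradient of `q` is an affine function of `q`. -/
theorem sum_sign_mul_sq {n : ℕ} {τ : ℝ} {ε α β : Fin n → ℝ} (hε : ∀ k, ε k ^ 2 = 1)
    (x : Fin n → ℝ) :
    ∑ k, ε k * (2 * τ * ε k * x k + α k) ^ 2 =
      4 * τ * ∑ k, (τ * ε k * (x k) ^ 2 + α k * x k + β k)
        + ∑ k, (ε k * (α k) ^ 2 - 4 * τ * β k) := by
  rw [Finset.mul_sum, ← Finset.sum_add_distrib]
  refine Finset.sum_congr rfl fun k _ => ?_
  linear_combination (4 * τ ^ 2 * x k ^ 2 * ε k + 4 * τ * x k * α k) * hε k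

/-- **Theorem 1.2, "if" direction.** If `Φ`, `F` satisfy the reduced ODE system at every
value of `q` on `Ω`, then `φ = Φ ∘ q`, `f = F ∘ q` satisfy the conformal soliton system. -/
theorem stmt_0 (n : ℕ) (hn : 2 ≤ n) (ε : Fin n → ℝ)
    (hε : ∀ k, ε k = 1 ∨ ε k = -1)
    (Ω : Set (Fin n → ℝ)) (hΩ : IsOpen Ω)
    (τ lam : ℝ) (α β : Fin n → ℝ)
    (Φ F : ℝ → ℝ) (hΦ : ContDiff ℝ (⊤ : ℕ∞) Φ) (hF : ContDiff ℝ (⊤ : ℕ∞) F)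
    (q : (Fin n → ℝ) → ℝ)
    (hq : ∀ x, q x = ∑ k, (τ * ε k * (x k) ^ 2 + α k * x k + β k))
    (Λ : ℝ) (hΛ : Λ = ∑ k, (ε k * (α k) ^ 2 - 4 * τ * β k))
    (hODE : ∀ s ∈ q '' Ω, ReducedODE n τ Λ lam Φ F s) :
    SolitonSystem n ε Ω (Φ ∘ q) (F ∘ q) lam := by
  have hε2 : ∀ k, ε k ^ 2 = 1 := fun k => by rcases hε k with h | h <;> simp [h]
  have dΦ := hΦ.differentiable (by simp)
  have dF := hF.differentiable (by simp)
  refine ⟨fun i j hij x hx => ?_, fun i x hx => ?_⟩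
  · obtain ⟨h1, -⟩ := hODE (q x) ⟨x, hx, rfl⟩
    simp only [pd_pd_comp_quad hq hΦ, pd_pd_comp_quad hq hF, pd_comp_quad hq dΦ,
      pd_comp_quad hq dF, Function.comp_apply, if_neg hij]
    linear_combination (2 * τ * ε i * x i + α i) * (2 * τ * ε j * x j + α j) * h1
  · obtain ⟨h1, h2⟩ := hODE (q x) ⟨x, hx, rfl⟩
    simp only [pd_pd_comp_quad hq hΦ, pd_pd_comp_quad hq hF, pd_comp_quad hq dΦ,
      pd_comp_quad hq dF, Function.comp_apply, if_true]
    have hS : ∑ k, ε k * (2 * τ * ε k * x k + α k) ^ 2 = 4 * τ * q x + Λ := by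
      rw [hq x, hΛ]
      exact sum_sign_mul_sq hε2 x
    set A := Φ (q x) * deriv (deriv Φ) (q x) - ((n : ℝ) - 1) * (deriv Φ (q x)) ^ 2
      - Φ (q x) * deriv Φ (q x) * deriv F (q x) with hA
    have hsum : ∑ k, ε k * (Φ (q x) * (deriv (deriv Φ) (q x) * (2 * τ * ε k * x k + α k)
          * (2 * τ * ε k * x k + α k) + 2 * τ * ε k * deriv Φ (q x))
        - ((n : ℝ) - 1) * (deriv Φ (q x) * (2 * τ * ε k * x k + α k)) ^ 2
        - Φ (q x) * (deriv Φ (q x) * (2 * τ * ε k * x k + α k))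
          * (deriv F (q x) * (2 * τ * ε k * x k + α k)))
        = A * (4 * τ * q x + Λ) + n * (2 * τ * Φ (q x) * deriv Φ (q x)) := by
      have hc : (n : ℝ) * (2 * τ * Φ (q x) * deriv Φ (q x))
          = ∑ _k : Fin n, 2 * τ * Φ (q x) * deriv Φ (q x) := by simp
      rw [← hS, hc, Finset.mul_sum, ← Finset.sum_add_distrib]
      refine Finset.sum_congr rfl fun k _ => ?_
      rw [hA]
      linear_combination (2 * τ * Φ (q x) * deriv Φ (q x)) * hε2 k
    rw [hsum]
    linear_combination Φ (q x) * (2 * τ * ε i * x i + α i) ^ 2 * h1 + ε i * h2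
end

section
/- Let n ≥ 2, let Ω ⊆ ℝⁿ be open, let τ ∈ ℝ, α, β : Fin n → ℝ, and let Φ, F : ℝ → ℝ be smooth. Suppose φ = Φ ∘ q and f = F ∘ q satisfy the conformal soliton system on Ω. Then for every x ∈ Ω for which there exist two distinct indices i ≠ j with 2τ·ε i·xᵢ + α i ≠ 0 and 2τ·ε j·xⱼ + α j ≠ 0, the functions Φ and F satisfy the reduced ODE system at s = q(x). (This is the 'only if' direction of Theorem 1.2.) -/
theorem hasFDerivAt_q {n : ℕ} (ε α β : Fin n → ℝ) (τ : ℝ) (q : (Fin n → ℝ) → ℝ)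
    (hq : ∀ x, q x = ∑ k, (τ * ε k * (x k) ^ 2 + α k * x k + β k)) (x : Fin n → ℝ) :
    HasFDerivAt q (∑ k, (2 * τ * ε k * x k + α k) •
      (ContinuousLinearMap.proj k : (Fin n → ℝ) →L[ℝ] ℝ)) x := by
  rw [funext hq]
  refine HasFDerivAt.fun_sum fun k _ => ?_
  have h : HasDerivAt (fun t : ℝ => τ * ε k * t ^ 2 + α k * t + β k)
      (2 * τ * ε k * x k + α k) (x k) := by
    refine (((((hasDerivAt_id' (x k)).pow 2).const_mul (τ * ε k)).add
      ((hasDerivAt_id' (x k)).const_mul (α k))).add_const (β k)).congr_deriv ?_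
    push_cast
    ring
  exact h.comp_hasFDerivAt x (ContinuousLinearMap.proj k : (Fin n → ℝ) →L[ℝ] ℝ).hasFDerivAt

theorem pd_comp_q {n : ℕ} (ε α β : Fin n → ℝ) (τ : ℝ) (q : (Fin n → ℝ) → ℝ)
    (hq : ∀ x, q x = ∑ k, (τ * ε k * (x k) ^ 2 + α k * x k + β k))
    (G : ℝ → ℝ) (hG : Differentiable ℝ G) (i : Fin n) (x : Fin n → ℝ) :
    pd i (G ∘ q) x = deriv G (q x) * (2 * τ * ε i * x i + α i) := by
  have h := (hG (q x)).hasDerivAt.comp_hasFDerivAt x (hasFDerivAt_q ε α β τ q hq x)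
  rw [pd, h.fderiv]
  simp [Pi.single_apply]

theorem pd_pd_comp_q {n : ℕ} (ε α β : Fin n → ℝ) (τ : ℝ) (q : (Fin n → ℝ) → ℝ)
    (hq : ∀ x, q x = ∑ k, (τ * ε k * (x k) ^ 2 + α k * x k + β k))
    (G : ℝ → ℝ) (hG : ContDiff ℝ (⊤ : ℕ∞) G) (i j : Fin n) (x : Fin n → ℝ) :
    pd i (pd j (G ∘ q)) x =
      deriv (deriv G) (q x) * (2 * τ * ε i * x i + α i) * (2 * τ * ε j * x j + α j)
        + deriv G (q x) * (if i = j then 2 * τ * ε j else 0) := by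
  have hG1 : Differentiable ℝ G := hG.differentiable (by simp)
  have hG2 : Differentiable ℝ (deriv G) :=
    (contDiff_infty_iff_deriv.1 hG).2.differentiable (by simp)
  rw [funext (pd_comp_q ε α β τ q hq G hG1 j)]
  have h1 := (hG2 (q x)).hasDerivAt.comp_hasFDerivAt x (hasFDerivAt_q ε α β τ q hq x)
  have h2 : HasFDerivAt (fun y : Fin n → ℝ => 2 * τ * ε j * y j + α j)
      ((2 * τ * ε j) • (ContinuousLinearMap.proj j : (Fin n → ℝ) →L[ℝ] ℝ)) x :=
    ((ContinuousLinearMap.proj j : (Fin n → ℝ) →L[ℝ] ℝ).hasFDerivAt.const_mul _).add_const _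
  have h3 : fderiv ℝ (fun y => deriv G (q y) * (2 * τ * ε j * y j + α j)) x = _ :=
    (h1.mul h2).fderiv
  rw [pd, h3]
  by_cases hij : i = j
  · subst hij
    simp [Pi.single_apply]
    ring
  · simp [Pi.single_apply, hij, Ne.symm hij]
    ring

theorem sum_eps_mul_sq {n : ℕ} (ε α β : Fin n → ℝ) (τ : ℝ) (hε : ∀ k, ε k * ε k = 1)
    (x : Fin n → ℝ) :
    ∑ k, ε k * (2 * τ * ε k * x k + α k) ^ 2 =
      4 * τ * ∑ k, (τ * ε k * (x k) ^ 2 + α k * x k + β k)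
        + ∑ k, (ε k * (α k) ^ 2 - 4 * τ * β k) := by
  rw [Finset.mul_sum, ← Finset.sum_add_distrib]
  refine Finset.sum_congr rfl fun k _ => ?_
  linear_combination (4 * τ ^ 2 * ε k * x k ^ 2 + 4 * τ * x k * α k) * hε k

/-- **Theorem 1.2, "only if" direction.** If `φ = Φ ∘ q`, `f = F ∘ q` satisfy the conformal
soliton system on `Ω`, then at every point where at least two components of the gradient of
`q` are nonzero, `Φ` and `F` satisfy the reduced ODE system at `s = q x`. -/
theorem stmt_1 (n : ℕ) (hn : 2 ≤ n) (ε : Fin n → ℝ)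
    (hε : ∀ k, ε k = 1 ∨ ε k = -1)
    (Ω : Set (Fin n → ℝ)) (hΩ : IsOpen Ω)
    (τ lam : ℝ) (α β : Fin n → ℝ)
    (Φ F : ℝ → ℝ) (hΦ : ContDiff ℝ (⊤ : ℕ∞) Φ) (hF : ContDiff ℝ (⊤ : ℕ∞) F)
    (q : (Fin n → ℝ) → ℝ)
    (hq : ∀ x, q x = ∑ k, (τ * ε k * (x k) ^ 2 + α k * x k + β k))
    (Λ : ℝ) (hΛ : Λ = ∑ k, (ε k * (α k) ^ 2 - 4 * τ * β k))
    (hSol : SolitonSystem n ε Ω (Φ ∘ q) (F ∘ q) lam) :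
    ∀ x ∈ Ω, (∃ i j : Fin n, i ≠ j ∧
        2 * τ * ε i * x i + α i ≠ 0 ∧ 2 * τ * ε j * x j + α j ≠ 0) →
      ReducedODE n τ Λ lam Φ F (q x) := by
  rintro x hx ⟨i, j, hij, hi, hj⟩
  have hε2 : ∀ k, ε k * ε k = 1 := fun k => by rcases hε k with h | h <;> simp [h]
  have hS := sum_eps_mul_sq ε α β τ hε2 x
  rw [← hq, ← hΛ] at hS
  have hoff := hSol.1 i j hij x hx
  have hdiag := hSol.2 i x hx
  have hΦ1 : Differentiable ℝ Φ := hΦ.differentiable (by simp)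
  have hF1 : Differentiable ℝ F := hF.differentiable (by simp)
  simp only [pd_pd_comp_q ε α β τ q hq Φ hΦ, pd_pd_comp_q ε α β τ q hq F hF,
    pd_comp_q ε α β τ q hq Φ hΦ1, pd_comp_q ε α β τ q hq F hF1, Function.comp_apply,
    if_neg hij, if_true] at hoff hdiag
  have hO1 : ((n : ℝ) - 2) * deriv (deriv Φ) (q x) + Φ (q x) * deriv (deriv F) (q x)
      + 2 * deriv Φ (q x) * deriv F (q x) = 0 := by
    refine (mul_eq_zero.1 ?_).resolve_right (mul_ne_zero hi hj)
    linear_combination hoff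
  refine ⟨hO1, ?_⟩
  -- The trace term: the Hessian of `q` contributes `∑ₖ εₖ · 2 τ εₖ = 2 τ n`.
  have htrace : ∑ k, ε k * (Φ (q x) * (deriv (deriv Φ) (q x) * (2 * τ * ε k * x k + α k)
        * (2 * τ * ε k * x k + α k) + deriv Φ (q x) * (2 * τ * ε k))
      - ((n : ℝ) - 1) * (deriv Φ (q x) * (2 * τ * ε k * x k + α k)) ^ 2
      - Φ (q x) * (deriv Φ (q x) * (2 * τ * ε k * x k + α k))
        * (deriv F (q x) * (2 * τ * ε k * x k + α k)))
      = (Φ (q x) * deriv (deriv Φ) (q x) - ((n : ℝ) - 1) * (deriv Φ (q x)) ^ 2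
        - Φ (q x) * deriv Φ (q x) * deriv F (q x)) * (4 * τ * q x + Λ)
        + n * (2 * τ * Φ (q x) * deriv Φ (q x)) := by
    have hc : (n : ℝ) * (2 * τ * Φ (q x) * deriv Φ (q x))
        = ∑ _k : Fin n, 2 * τ * Φ (q x) * deriv Φ (q x) := by simp
    rw [← hS, hc, Finset.mul_sum, ← Finset.sum_add_distrib]
    refine Finset.sum_congr rfl fun k _ => ?_
    linear_combination (2 * τ * Φ (q x) * deriv Φ (q x)) * hε2 k
  rw [htrace] at hdiag
  have hεi : ε i ≠ 0 := fun h => by simpa [h] using hε2 i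
  refine mul_left_cancel₀ hεi ?_
  linear_combination hdiag - Φ (q x) * (2 * τ * ε i * x i + α i) ^ 2 * hO1
end

section
/- Let n ≥ 2, let Ω ⊆ ℝⁿ be a convex open set, and let ξ : Ω → ℝ be smooth with ∂ᵢξ(x) ≠ 0 for every i and every x ∈ Ω. Let Φ, F : ℝ → ℝ be smooth functions such that Φ(s) ≠ 0 and (n−2)Φ'(s) + Φ(s)F'(s) ≠ 0 for every s in the image ξ(Ω), and suppose φ = Φ ∘ ξ and f = F ∘ ξ satisfy the conformal soliton system on Ω. Then there exist constants τ ∈ ℝ and α, β : Fin n → ℝ such that every point of Ω has an open neighborhood U ⊆ Ω on which ξ(x) = Ψ(Σₖ(τ·ε k·xₖ² + (α k)·xₖ + β k)) for some smooth function Ψ : ℝ → ℝ. (This is the 'only if' direction of Theorem 1.1: the only ansätze reducing the soliton PDE system to ODEs are functions of Σₖ(τ·ε k·xₖ² + α k·xₖ + β k).) -/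
open Set Filter Topology
open scoped ContDiff

/-! ### Partial derivatives on open sets -/

lemma pd_smooth {n : ℕ} {Ω : Set (Fin n → ℝ)} (hΩ : IsOpen Ω) {u : (Fin n → ℝ) → ℝ}
    (hu : ContDiffOn ℝ ∞ u Ω) (i : Fin n) : ContDiffOn ℝ ∞ (pd i u) Ω := by
  have h : ContDiffOn ℝ ∞ (fderiv ℝ u) Ω := hu.fderiv_of_isOpen hΩ (by simp)
  exact h.clm_apply contDiffOn_const

lemma smooth_diffAt {n : ℕ} {Ω : Set (Fin n → ℝ)} (hΩ : IsOpen Ω) {u : (Fin n → ℝ) → ℝ}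
    (hu : ContDiffOn ℝ ∞ u Ω) {x : Fin n → ℝ} (hx : x ∈ Ω) : DifferentiableAt ℝ u x :=
  (hu.contDiffAt (hΩ.mem_nhds hx)).differentiableAt (by simp)

lemma pd_congr {n : ℕ} {Ω : Set (Fin n → ℝ)} (hΩ : IsOpen Ω) {u v : (Fin n → ℝ) → ℝ}
    (h : ∀ x ∈ Ω, u x = v x) (i : Fin n) {x : Fin n → ℝ} (hx : x ∈ Ω) : pd i u x = pd i v x := by
  have : u =ᶠ[𝓝 x] v := by filter_upwards [hΩ.mem_nhds hx] with y hy using h y hy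
  simp only [pd, this.fderiv_eq]

lemma pd_comm {n : ℕ} {Ω : Set (Fin n → ℝ)} (hΩ : IsOpen Ω) {u : (Fin n → ℝ) → ℝ}
    (hu : ContDiffOn ℝ ∞ u Ω) (i j : Fin n) {x : Fin n → ℝ} (hx : x ∈ Ω) :
    pd i (pd j u) x = pd j (pd i u) x := by
  have h : ContDiffOn ℝ ∞ (fderiv ℝ u) Ω := hu.fderiv_of_isOpen hΩ (by simp)
  have hd : DifferentiableAt ℝ (fderiv ℝ u) x :=
    (h.contDiffAt (hΩ.mem_nhds hx)).differentiableAt (by simp)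
  have hs : IsSymmSndFDerivAt ℝ u x :=
    (hu.contDiffAt (hΩ.mem_nhds hx)).isSymmSndFDerivAt
      (by simpa using WithTop.coe_le_coe.2 (le_top : (2 : ℕ∞) ≤ ⊤))
  have key : ∀ v w : Fin n → ℝ,
      fderiv ℝ (fun y => fderiv ℝ u y v) x w = fderiv ℝ (fderiv ℝ u) x w v := by
    intro v w
    rw [fderiv_clm_apply hd (differentiableAt_const v)]
    simp
  change fderiv ℝ (fun y => fderiv ℝ u y _) x _ = fderiv ℝ (fun y => fderiv ℝ u y _) x _
  rw [key, key]
  exact hs _ _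

lemma pd_comp {n : ℕ} {ξ : (Fin n → ℝ) → ℝ} {x : Fin n → ℝ} (hξ : DifferentiableAt ℝ ξ x)
    {G : ℝ → ℝ} {g : ℝ} (hG : HasDerivAt G g (ξ x)) (i : Fin n) :
    pd i (G ∘ ξ) x = g * pd i ξ x := by
  simp [pd, (hG.comp_hasFDerivAt x hξ.hasFDerivAt).fderiv]

lemma pd_mul {n : ℕ} {u v : (Fin n → ℝ) → ℝ} {x : Fin n → ℝ} (hu : DifferentiableAt ℝ u x)
    (hv : DifferentiableAt ℝ v x) (i : Fin n) :
    pd i (fun y => u y * v y) x = pd i u x * v x + u x * pd i v x := by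
  simp only [pd, fderiv_fun_mul hu hv]
  simp
  ring

lemma pd_pd_comp {n : ℕ} {Ω : Set (Fin n → ℝ)} (hΩ : IsOpen Ω) {ξ : (Fin n → ℝ) → ℝ}
    (hξ : ContDiffOn ℝ ∞ ξ Ω) {G G₁ G₂ : ℝ → ℝ}
    (hG : ∀ x ∈ Ω, HasDerivAt G (G₁ (ξ x)) (ξ x))
    (hG₁ : ∀ x ∈ Ω, HasDerivAt G₁ (G₂ (ξ x)) (ξ x)) (i j : Fin n) {x : Fin n → ℝ} (hx : x ∈ Ω) :
    pd i (pd j (G ∘ ξ)) x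
      = G₂ (ξ x) * pd i ξ x * pd j ξ x + G₁ (ξ x) * pd i (pd j ξ) x := by
  have h1 : ∀ y ∈ Ω, pd j (G ∘ ξ) y = (G₁ ∘ ξ) y * pd j ξ y := fun y hy =>
    pd_comp (smooth_diffAt hΩ hξ hy) (hG y hy) j
  have hd := smooth_diffAt hΩ hξ hx
  rw [pd_congr hΩ h1 i hx,
    pd_mul ((hG₁ x hx).differentiableAt.comp x hd) (smooth_diffAt hΩ (pd_smooth hΩ hξ j) hx),
    pd_comp hd (hG₁ x hx)]
  simp

lemma eq_add_const_of_pd_eq {n : ℕ} {Ω : Set (Fin n → ℝ)} (hΩ : IsOpen Ω) (hc : IsPreconnected Ω)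
    {u w : (Fin n → ℝ) → ℝ} (hu : DifferentiableOn ℝ u Ω) (hw : DifferentiableOn ℝ w Ω)
    (h : ∀ x ∈ Ω, ∀ j, pd j u x = pd j w x) : ∃ c : ℝ, ∀ x ∈ Ω, u x = w x + c := by
  refine hΩ.exists_eq_add_of_fderiv_eq hc hu hw fun x hx => ?_
  refine ContinuousLinearMap.coe_injective ?_
  refine LinearMap.pi_ext' fun j => ?_
  ext
  simpa [pd] using h x hx j

/-! ### Functions whose Hessian is a multiple of the pseudo-Euclidean metric -/

lemma pd_linear {n : ℕ} (a : ℝ) (i j : Fin n) (x : Fin n → ℝ) :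
    pd j (fun y => a * y i) x = if i = j then a else 0 := by
  have h : HasFDerivAt (fun y : Fin n → ℝ => a * y i)
      (a • ContinuousLinearMap.proj (R := ℝ) (φ := fun _ : Fin n => ℝ) i) x :=
    (hasFDerivAt_apply i x).const_mul a
  simp [pd, h.fderiv, Pi.single_apply]

lemma pd_quadratic {n : ℕ} (a b : Fin n → ℝ) (j : Fin n) (x : Fin n → ℝ) :
    pd j (fun y => ∑ k, (a k * y k ^ 2 + b k * y k)) x = 2 * a j * x j + b j := by
  have h : HasFDerivAt (fun y : Fin n → ℝ => ∑ k, (a k * y k ^ 2 + b k * y k))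
      (∑ k, (a k * (2 * x k) + b k) •
        ContinuousLinearMap.proj (R := ℝ) (φ := fun _ : Fin n => ℝ) k) x := by
    refine HasFDerivAt.fun_sum fun k _ => ?_
    have h1 : HasDerivAt (fun t : ℝ => a k * t ^ 2 + b k * t) (a k * (2 * x k) + b k) (x k) := by
      simpa using ((hasDerivAt_pow 2 (x k)).const_mul (a k)).fun_add
        ((hasDerivAt_id' (x k)).const_mul (b k))
    have h2 : HasFDerivAt (fun y : Fin n → ℝ => y k)
      (ContinuousLinearMap.proj (R := ℝ) (φ := fun _ : Fin n => ℝ) k) x := hasFDerivAt_apply k x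
    exact h1.comp_hasFDerivAt x h2
  simp [pd, h.fderiv, Pi.single_apply]
  ring

/-- A function whose Hessian is pointwise proportional to `diag ε` is a quadratic polynomial: in
dimension at least two the proportionality factor is constant. -/
lemma exists_quadratic {n : ℕ} (hn : 2 ≤ n) {ε : Fin n → ℝ} (hε : ∀ k, ε k = 1 ∨ ε k = -1)
    {Ω : Set (Fin n → ℝ)} (hΩ : IsOpen Ω) (hc : IsPreconnected Ω) {u : (Fin n → ℝ) → ℝ}
    (hu : ContDiffOn ℝ ∞ u Ω) (hoff : ∀ i j, i ≠ j → ∀ x ∈ Ω, pd i (pd j u) x = 0)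
    (m : (Fin n → ℝ) → ℝ) (hdiag : ∀ i, ∀ x ∈ Ω, pd i (pd i u) x = ε i * m x) :
    ∃ (τ : ℝ) (α : Fin n → ℝ) (c : ℝ), ∀ x ∈ Ω,
      u x = ∑ k, (τ * ε k * x k ^ 2 + α k * x k) + c := by
  have hεsq : ∀ i, ε i * ε i = 1 := fun i => by rcases hε i with h | h <;> simp [h]
  have hv := pd_smooth hΩ hu
  have hvv := fun i => pd_smooth hΩ (hv i) i
  have hm : ∀ i, ∀ x ∈ Ω, m x = ε i * pd i (pd i u) x := by
    intro i x hx
    rw [hdiag i x hx, ← mul_assoc, hεsq, one_mul]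
  have hmd : DifferentiableOn ℝ m Ω := by
    let i : Fin n := ⟨0, by omega⟩
    exact (((hvv i).differentiableOn (by simp)).const_mul (ε i)).congr (hm i)
  have hm0 : ∀ x ∈ Ω, ∀ j, pd j m x = pd j (fun _ => (0 : ℝ)) x := by
    intro x hx j
    have : Nontrivial (Fin n) := Fin.nontrivial_iff_two_le.2 hn
    obtain ⟨i, hij⟩ := exists_ne j
    rw [pd_congr hΩ (hm i) j hx,
      pd_mul (differentiableAt_const _) (smooth_diffAt hΩ (hvv i) hx),
      pd_comm hΩ (hv i) j i hx, pd_congr hΩ (hoff j i hij.symm) i hx]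
    simp [pd]
  obtain ⟨M, hM⟩ := eq_add_const_of_pd_eq hΩ hc hmd (differentiableOn_const 0) hm0
  have hα : ∀ i, ∃ a : ℝ, ∀ x ∈ Ω, pd i u x = (ε i * M) * x i + a := by
    intro i
    refine eq_add_const_of_pd_eq hΩ hc ((hv i).differentiableOn (by simp))
      (w := fun x => (ε i * M) * x i) (by fun_prop) fun x hx j => ?_
    rw [pd_linear]
    split_ifs with h
    · subst h
      rw [hdiag i x hx, hM x hx, zero_add]
    · exact hoff j i (Ne.symm h) x hx
  choose α hα using hα
  obtain ⟨c, hc⟩ := eq_add_const_of_pd_eq hΩ hc (hu.differentiableOn (by simp))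
    (w := fun x => ∑ k, (M / 2 * ε k * x k ^ 2 + α k * x k)) (by fun_prop) fun x hx j => by
      rw [pd_quadratic, hα j x hx]; ring
  exact ⟨M / 2, α, c, hc⟩

/-! ### One-variable tools -/

lemma exists_primitive {I : Set ℝ} (hI : IsOpen I) (hI' : I.OrdConnected) {s₀ : ℝ} (hs₀ : s₀ ∈ I)
    {h : ℝ → ℝ} (hh : ContDiffOn ℝ ∞ h I) :
    ∃ H : ℝ → ℝ, ContDiffOn ℝ ∞ H I ∧ ∀ s ∈ I, HasDerivAt H (h s) s := by
  have hd : ∀ s ∈ I, HasDerivAt (fun t => ∫ y in s₀..t, h y) (h s) s := by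
    intro s hs
    refine intervalIntegral.integral_hasDerivAt_right
      (hh.continuousOn.mono (hI'.uIcc_subset hs₀ hs)).intervalIntegrable
      (hh.continuousOn.stronglyMeasurableAtFilter hI s hs)
      (hh.continuousOn.continuousAt (hI.mem_nhds hs))
  refine ⟨_, (contDiffOn_infty_iff_deriv_of_isOpen hI).2
    ⟨fun s hs => (hd s hs).differentiableAt.differentiableWithinAt,
      hh.congr fun s hs => (hd s hs).deriv⟩, hd⟩

/-- A local left inverse that is smooth on all of `ℝ`: the inverse function on a neighborhood of
`G s₀`, multiplied by a bump function. -/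
lemma exists_smooth_leftInverse {I : Set ℝ} (hI : IsOpen I) {s₀ : ℝ} (hs₀ : s₀ ∈ I) {G G₁ : ℝ → ℝ}
    (hG : ContDiffOn ℝ ∞ G I) (hG₁ : ∀ s ∈ I, HasDerivAt G (G₁ s) s) (h0 : ∀ s ∈ I, G₁ s ≠ 0) :
    ∃ (V : Set ℝ) (Ψ : ℝ → ℝ), IsOpen V ∧ s₀ ∈ V ∧ ContDiff ℝ ∞ Ψ ∧ ∀ s ∈ V, Ψ (G s) = s := by
  have hat : ∀ s ∈ I, ContDiffAt ℝ ∞ G s := fun s hs => hG.contDiffAt (hI.mem_nhds hs)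
  have hf := (hG₁ s₀ hs₀).hasFDerivAt_equiv (h0 s₀ hs₀)
  let e₀ := (hat s₀ hs₀).toOpenPartialHomeomorph G hf (by simp)
  -- Restricting to `I` makes the inverse smooth at every point of the target.
  let e := e₀.restrOpen I hI
  have heG : (e : ℝ → ℝ) = G := rfl
  have hes : e.source = e₀.source ∩ I := rfl
  have hs₀e : s₀ ∈ e.source :=
    ⟨(hat s₀ hs₀).mem_toOpenPartialHomeomorph_source hf (by simp), hs₀⟩
  have hsymm : ∀ a ∈ e.target, ContDiffAt ℝ ∞ e.symm a := by
    intro a ha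
    have hmem : e.symm a ∈ I := (e.map_target ha).2
    exact e.contDiffAt_symm_deriv (h0 _ hmem) ha (hG₁ _ hmem) (hat _ hmem)
  have htn : e.target ∈ 𝓝 (G s₀) := e.open_target.mem_nhds (e.map_source hs₀e)
  obtain ⟨r, hr, hrt⟩ := Metric.nhds_basis_closedBall.mem_iff.1 htn
  let χ : ContDiffBump (G s₀) := ⟨r / 2, r, half_pos hr, half_lt_self hr⟩
  refine ⟨e.source ∩ G ⁻¹' Metric.ball (G s₀) (r / 2), fun t => χ t * e.symm t, ?_, ?_, ?_, ?_⟩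
  · exact e.isOpen_inter_preimage Metric.isOpen_ball
  · exact ⟨hs₀e, Metric.mem_ball_self (half_pos hr)⟩
  · refine contDiff_iff_contDiffAt.2 fun t => ?_
    by_cases ht : t ∈ tsupport χ
    · rw [χ.tsupport_eq] at ht
      exact χ.contDiffAt.mul (hsymm t (hrt ht))
    · have : (fun t => χ t * e.symm t) =ᶠ[𝓝 t] fun _ => 0 := by
        filter_upwards [notMem_tsupport_iff_eventuallyEq.1 ht] with y hy
        simp [hy]
      exact contDiffAt_const.congr_of_eventuallyEq this
  · rintro s ⟨hs, hsb⟩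
    have h1 : χ (G s) = 1 := χ.one_of_mem_closedBall (Metric.ball_subset_closedBall hsb)
    have h2 : e.symm (G s) = s := e.left_inv hs
    simp [h1, h2]

lemma isOpen_image_of_pd_ne_zero {n : ℕ} (i : Fin n) {Ω : Set (Fin n → ℝ)} (hΩ : IsOpen Ω)
    {ξ : (Fin n → ℝ) → ℝ} (hξ : ContDiffOn ℝ ∞ ξ Ω) (h : ∀ x ∈ Ω, pd i ξ x ≠ 0) :
    IsOpen (ξ '' Ω) := by
  rw [isOpen_iff_mem_nhds]
  rintro _ ⟨x, hx, rfl⟩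
  have hs := (hξ.contDiffAt (hΩ.mem_nhds hx)).hasStrictFDerivAt (by simp)
  have hsurj : (fderiv ℝ ξ x).range = ⊤ := by
    refine LinearMap.range_eq_top.2 fun t => ⟨(t / pd i ξ x) • Pi.single i 1, ?_⟩
    have := h x hx
    change fderiv ℝ ξ x _ = t
    rw [map_smul]
    change t / pd i ξ x * pd i ξ x = t
    field_simp
  rw [← hs.map_nhds_eq_of_surj hsurj]
  exact image_mem_map (hΩ.mem_nhds hx)

/-- **Theorem 1.1, "only if" direction.** The only ansätze reducing the conformal soliton
PDE system to ODEs are (locally) functions of `∑ₖ (τ εₖ xₖ² + αₖ xₖ + βₖ)`. -/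
theorem stmt_2 (n : ℕ) (hn : 2 ≤ n) (ε : Fin n → ℝ)
    (hε : ∀ k, ε k = 1 ∨ ε k = -1)
    (Ω : Set (Fin n → ℝ)) (hΩ : IsOpen Ω) (hconv : Convex ℝ Ω)
    (lam : ℝ)
    (ξ : (Fin n → ℝ) → ℝ) (hξ : ContDiffOn ℝ (⊤ : ℕ∞) ξ Ω)
    (hξ' : ∀ i : Fin n, ∀ x ∈ Ω, pd i ξ x ≠ 0)
    (Φ F : ℝ → ℝ) (hΦ : ContDiff ℝ (⊤ : ℕ∞) Φ) (hF : ContDiff ℝ (⊤ : ℕ∞) F)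
    (hΦ0 : ∀ s ∈ ξ '' Ω, Φ s ≠ 0)
    (hnd : ∀ s ∈ ξ '' Ω, ((n : ℝ) - 2) * deriv Φ s + Φ s * deriv F s ≠ 0)
    (hSol : SolitonSystem n ε Ω (Φ ∘ ξ) (F ∘ ξ) lam) :
    ∃ (τ : ℝ) (α β : Fin n → ℝ), ∀ p ∈ Ω, ∃ U : Set (Fin n → ℝ),
      IsOpen U ∧ p ∈ U ∧ U ⊆ Ω ∧ ∃ Ψ : ℝ → ℝ, ContDiff ℝ (⊤ : ℕ∞) Ψ ∧
        ∀ x ∈ U, ξ x = Ψ (∑ k, (τ * ε k * (x k) ^ 2 + α k * x k + β k)) := by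
  rcases Ω.eq_empty_or_nonempty with rfl | ⟨x₀, hx₀⟩
  · exact ⟨0, 0, 0, by simp⟩
  have hpre : IsPreconnected Ω := hconv.isPreconnected
  have hI : IsOpen (ξ '' Ω) := isOpen_image_of_pd_ne_zero ⟨0, by omega⟩ hΩ hξ (hξ' _)
  have hI' : (ξ '' Ω).OrdConnected := (hpre.image ξ hξ.continuousOn).ordConnected
  have hΦ1 : ContDiff ℝ ∞ (deriv Φ) := (contDiff_infty_iff_deriv.1 hΦ).2
  have hF1 : ContDiff ℝ ∞ (deriv F) := (contDiff_infty_iff_deriv.1 hF).2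
  have hΦ2 : ContDiff ℝ ∞ (deriv (deriv Φ)) := (contDiff_infty_iff_deriv.1 hΦ1).2
  have hF2 : ContDiff ℝ ∞ (deriv (deriv F)) := (contDiff_infty_iff_deriv.1 hF1).2
  have dΦ : ∀ s, HasDerivAt Φ (deriv Φ s) s := fun s =>
    (hΦ.differentiable (by simp) s).hasDerivAt
  have dF : ∀ s, HasDerivAt F (deriv F s) s := fun s =>
    (hF.differentiable (by simp) s).hasDerivAt
  have dΦ1 : ∀ s, HasDerivAt (deriv Φ) (deriv (deriv Φ) s) s := fun s =>
    (hΦ1.differentiable (by simp) s).hasDerivAt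
  have dF1 : ∀ s, HasDerivAt (deriv F) (deriv (deriv F) s) s := fun s =>
    (hF1.differentiable (by simp) s).hasDerivAt
  obtain ⟨A, hA⟩ : ∃ A : ℝ → ℝ, A = fun s => ((n : ℝ) - 2) * deriv Φ s + Φ s * deriv F s :=
    ⟨_, rfl⟩
  obtain ⟨B, hB⟩ : ∃ B : ℝ → ℝ, B = fun s => ((n : ℝ) - 2) * deriv (deriv Φ) s
      + Φ s * deriv (deriv F) s + 2 * deriv Φ s * deriv F s := ⟨_, rfl⟩
  have hA0 : ∀ s ∈ ξ '' Ω, A s ≠ 0 := by rw [hA]; exact hnd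
  have hAs : ContDiff ℝ ∞ A := by
    rw [hA]; exact (contDiff_const.mul hΦ1).add (hΦ.mul hF1)
  have hBs : ContDiff ℝ ∞ B := by
    rw [hB]
    exact ((contDiff_const.mul hΦ2).add (hΦ.mul hF2)).add ((contDiff_const.mul hΦ1).mul hF1)
  -- The reparametrization `G` with `G' = exp H`, `H' = B / A`.
  have hx₀I : ξ x₀ ∈ ξ '' Ω := mem_image_of_mem ξ hx₀
  obtain ⟨H, hHs, hH⟩ := exists_primitive hI hI' hx₀I (hBs.contDiffOn.div hAs.contDiffOn hA0)
  obtain ⟨G, hGs, hG⟩ := exists_primitive hI hI' hx₀I (h := fun s => Real.exp (H s)) hHs.exp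
  have hG1 : ∀ s ∈ ξ '' Ω,
      HasDerivAt (fun s => Real.exp (H s)) (Real.exp (H s) * (B s / A s)) s :=
    fun s hs => (hH s hs).exp
  have hu : ContDiffOn ℝ ∞ (G ∘ ξ) Ω := hGs.comp hξ (mapsTo_image ξ Ω)
  have uij : ∀ i j, ∀ x ∈ Ω, pd i (pd j (G ∘ ξ)) x = Real.exp (H (ξ x)) / A (ξ x) *
      (A (ξ x) * pd i (pd j ξ) x + B (ξ x) * pd i ξ x * pd j ξ x) := by
    intro i j x hx
    rw [pd_pd_comp hΩ hξ (G₁ := fun s => Real.exp (H s))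
      (G₂ := fun s => Real.exp (H s) * (B s / A s))
      (fun y hy => hG _ (mem_image_of_mem ξ hy)) (fun y hy => hG1 _ (mem_image_of_mem ξ hy)) i j hx]
    have := hA0 _ (mem_image_of_mem ξ hx)
    field_simp
    ring
  have pΦ : ∀ i j, ∀ x ∈ Ω, _ := fun i j x hx => pd_pd_comp hΩ hξ (x := x) (G := Φ)
    (fun y _ => dΦ _) (fun y _ => dΦ1 _) i j hx
  have pF : ∀ i j, ∀ x ∈ Ω, _ := fun i j x hx => pd_pd_comp hΩ hξ (x := x) (G := F)
    (fun y _ => dF _) (fun y _ => dF1 _) i j hx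
  have qΦ : ∀ i, ∀ x ∈ Ω, _ := fun i x hx => pd_comp (smooth_diffAt hΩ hξ hx) (dΦ (ξ x)) i
  have qF : ∀ i, ∀ x ∈ Ω, _ := fun i x hx => pd_comp (smooth_diffAt hΩ hξ hx) (dF (ξ x)) i
  have hoff : ∀ i j, i ≠ j → ∀ x ∈ Ω, pd i (pd j (G ∘ ξ)) x = 0 := by
    intro i j hij x hx
    have h := hSol.1 i j hij x hx
    rw [pΦ i j x hx, pF i j x hx, qΦ i x hx, qΦ j x hx, qF i x hx, qF j x hx] at h
    rw [uij i j x hx, hA, hB]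
    simp only [Function.comp_apply] at h
    refine mul_eq_zero_of_right _ ?_
    linear_combination h
  -- The sum over `k` in the diagonal equations, which does not involve the index `i`.
  let S : (Fin n → ℝ) → ℝ := fun x => ∑ k, ε k * ((Φ ∘ ξ) x * pd k (pd k (Φ ∘ ξ)) x
    - ((n : ℝ) - 1) * (pd k (Φ ∘ ξ) x) ^ 2 - (Φ ∘ ξ) x * pd k (Φ ∘ ξ) x * pd k (F ∘ ξ) x)
  have hdiag : ∀ i, ∀ x ∈ Ω, pd i (pd i (G ∘ ξ)) x
      = ε i * (Real.exp (H (ξ x)) / A (ξ x) * ((lam - S x) / Φ (ξ x))) := by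
    intro i x hx
    have h : _ + ε i * S x = ε i * lam := hSol.2 i x hx
    rw [pΦ i i x hx, pF i i x hx, qΦ i x hx, qF i x hx] at h
    have h0 := hΦ0 _ (mem_image_of_mem ξ hx)
    have key : A (ξ x) * pd i (pd i ξ) x + B (ξ x) * pd i ξ x * pd i ξ x
        = ε i * ((lam - S x) / Φ (ξ x)) := by
      rw [hA, hB]
      simp only [Function.comp_apply] at h
      field_simp
      linear_combination h
    rw [uij i i x hx, key]
    ring
  obtain ⟨τ, α, c, hq⟩ := exists_quadratic hn hε hΩ hpre hu hoff _ hdiag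
  refine ⟨τ, α, fun _ => c / n, fun p hp => ?_⟩
  obtain ⟨V, Ψ, hV, hpV, hΨ, hinv⟩ := exists_smooth_leftInverse hI (mem_image_of_mem ξ hp) hGs hG
    fun s _ => (Real.exp_pos _).ne'
  refine ⟨Ω ∩ ξ ⁻¹' V, hξ.continuousOn.isOpen_inter_preimage hΩ hV, ⟨hp, hpV⟩,
    inter_subset_left, Ψ, hΨ, ?_⟩
  rintro x ⟨hx, hxV⟩
  have hn0 : (n : ℝ) ≠ 0 := by positivity
  have hsum : ∑ k, (τ * ε k * (x k) ^ 2 + α k * x k + c / n) = G (ξ x) := by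
    rw [Finset.sum_add_distrib]
    have := hq x hx
    simp only [Function.comp_apply] at this
    rw [this]
    simp
    field_simp
  rw [hsum, hinv _ hxV]
end

section
/- Let n ≥ 2, let Ω ⊆ ℝⁿ be open, and let φ, f : Ω → ℝ be smooth with φ(x) ≠ 0 for all x ∈ Ω, satisfying for every index i the diagonal equations: φ·[(n−2)∂ᵢ∂ᵢφ + φ·∂ᵢ∂ᵢf + 2·∂ᵢφ·∂ᵢf] + ε i·Σₖ ε k·[φ·∂ₖ∂ₖφ − (n−1)(∂ₖφ)² − φ·∂ₖφ·∂ₖf] = ε i·λ on Ω. Then for every index i, the following identity holds on Ω: n·ε i·[(n−2)∂ᵢ∂ᵢφ + φ·∂ᵢ∂ᵢf + 2·∂ᵢφ·∂ᵢf] = Σₖ ε k·[(n−2)∂ₖ∂ₖφ + φ·∂ₖ∂ₖf + 2·∂ₖφ·∂ₖf]. (Equation (16) in the proof of Theorem 1.1.) -/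
/-- **Equation (16)** in the proof of Theorem 1.1: consequence of the diagonal
soliton equations. -/
theorem stmt_4 (n : ℕ) (hn : 2 ≤ n) (ε : Fin n → ℝ)
    (hε : ∀ k, ε k = 1 ∨ ε k = -1)
    (Ω : Set (Fin n → ℝ)) (hΩ : IsOpen Ω)
    (φ f : (Fin n → ℝ) → ℝ) (hφ : ContDiffOn ℝ (⊤ : ℕ∞) φ Ω) (hf : ContDiffOn ℝ (⊤ : ℕ∞) f Ω)
    (hφ0 : ∀ x ∈ Ω, φ x ≠ 0)
    (lam : ℝ)
    (hdiag : ∀ i : Fin n, ∀ x ∈ Ω,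
      φ x * (((n : ℝ) - 2) * pd i (pd i φ) x + φ x * pd i (pd i f) x
          + 2 * pd i φ x * pd i f x)
        + ε i * ∑ k, ε k * (φ x * pd k (pd k φ) x - ((n : ℝ) - 1) * (pd k φ x) ^ 2
          - φ x * pd k φ x * pd k f x) = ε i * lam) :
    ∀ i : Fin n, ∀ x ∈ Ω,
      (n : ℝ) * ε i * (((n : ℝ) - 2) * pd i (pd i φ) x + φ x * pd i (pd i f) x
          + 2 * pd i φ x * pd i f x)
        = ∑ k, ε k * (((n : ℝ) - 2) * pd k (pd k φ) x + φ x * pd k (pd k f) x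
          + 2 * pd k φ x * pd k f x) := by
  intro i x hx
  set A : Fin n → ℝ := fun k => ((n : ℝ) - 2) * pd k (pd k φ) x + φ x * pd k (pd k f) x
          + 2 * pd k φ x * pd k f x with hA
  set S : ℝ := ∑ k, ε k * (φ x * pd k (pd k φ) x - ((n : ℝ) - 1) * (pd k φ x) ^ 2
          - φ x * pd k φ x * pd k f x) with hS
  have hφx := hφ0 x hx
  -- Multiplying the `k`-th equation by `ε k` and using `ε k ^ 2 = 1` makes the rest free of `k`.
  have key : ∀ k, ε k * A k = (lam - S) / φ x := by
    intro k
    have h : φ x * A k + ε k * S = ε k * lam := hdiag k x hx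
    have hsq : ε k * ε k = 1 := by rcases hε k with h | h <;> rw [h] <;> norm_num
    rw [eq_div_iff hφx]
    linear_combination ε k * h + (lam - S) * hsq
  change (n : ℝ) * ε i * A i = ∑ k, ε k * A k
  rw [Finset.sum_congr rfl fun k _ => key k, mul_assoc, key i]
  simp
end

section
/- Let n ≥ 3 and let I ⊆ ℝ be an open interval. Let Φ, F : I → ℝ be smooth with Φ(s) ≠ 0 for all s ∈ I. If (n−2)Φ'(s) + Φ(s)F'(s) = 0 for all s ∈ I and also (n−2)Φ''(s) + Φ(s)F''(s) + 2Φ'(s)F'(s) = 0 for all s ∈ I, then Φ' ≡ 0 and F' ≡ 0 on I, i.e. both Φ and F are constant. (The triviality claim around equation (18) in the proof of Theorem 1.1: an ansatz solution with (n−2)φ' + φf' = 0 is trivial.) -/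
/-!
Differentiating `(n-2)Φ' + ΦF' = 0` gives `(n-2)Φ'' + Φ'F' + ΦF'' = 0`; subtracting this from the
second-order equation leaves `Φ'F' = 0`. Multiplying the first-order equation by `Φ'` then yields
`(n-2)Φ'² = 0`, so `Φ' = 0`, and `F' = 0` because `Φ` does not vanish. Functions with zero
derivative on an interval are constant.
-/

/-- **Triviality claim (eq. (18)) in the proof of Theorem 1.1.** If a solution of the first
reduced ODE also satisfies `(n−2)Φ' + Φ F' = 0`, then both `Φ` and `F` are trivial
(constant). -/
theorem stmt_5 (n : ℕ) (hn : 3 ≤ n) (a b : ℝ) (hab : a < b)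
    (Φ F : ℝ → ℝ)
    (hΦ : ContDiffOn ℝ (⊤ : ℕ∞) Φ (Set.Ioo a b)) (hF : ContDiffOn ℝ (⊤ : ℕ∞) F (Set.Ioo a b))
    (hΦ0 : ∀ s ∈ Set.Ioo a b, Φ s ≠ 0)
    (h1 : ∀ s ∈ Set.Ioo a b, ((n : ℝ) - 2) * deriv Φ s + Φ s * deriv F s = 0)
    (h2 : ∀ s ∈ Set.Ioo a b, ((n : ℝ) - 2) * deriv (deriv Φ) s
        + Φ s * deriv (deriv F) s + 2 * deriv Φ s * deriv F s = 0) :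
    (∀ s ∈ Set.Ioo a b, deriv Φ s = 0 ∧ deriv F s = 0) ∧
      (∀ s ∈ Set.Ioo a b, ∀ t ∈ Set.Ioo a b, Φ s = Φ t ∧ F s = F t) := by
  have hn2 : (0 : ℝ) < (n : ℝ) - 2 := by
    have : (3 : ℝ) ≤ n := by exact_mod_cast hn
    linarith
  have hdiff : ∀ {G : ℝ → ℝ}, ContDiffOn ℝ (⊤ : ℕ∞) G (Set.Ioo a b) →
      DifferentiableOn ℝ G (Set.Ioo a b) := fun hG => hG.differentiableOn (by simp)
  have hderiv : ∀ {G : ℝ → ℝ}, ContDiffOn ℝ (⊤ : ℕ∞) G (Set.Ioo a b) →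
      DifferentiableOn ℝ (deriv G) (Set.Ioo a b) := fun hG =>
    hdiff (hG.deriv_of_isOpen isOpen_Ioo (by simp))
  have key : ∀ s ∈ Set.Ioo a b, deriv Φ s = 0 ∧ deriv F s = 0 := by
    intro s hs
    have hnhds : Set.Ioo a b ∈ nhds s := isOpen_Ioo.mem_nhds hs
    have dΦ := ((hdiff hΦ).differentiableAt hnhds).hasDerivAt
    have dΦ' := ((hderiv hΦ).differentiableAt hnhds).hasDerivAt
    have dF' := ((hderiv hF).differentiableAt hnhds).hasDerivAt
    have hD := (dΦ'.const_mul ((n : ℝ) - 2)).add (dΦ.mul dF')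
    -- The left side of `h1` vanishes near `s`, hence so does its derivative at `s`.
    have hzero := (hasDerivAt_const s (0 : ℝ)).congr_of_eventuallyEq
      (Filter.eventually_of_mem hnhds h1)
    have h3 := hD.unique hzero
    have hprod : deriv Φ s * deriv F s = 0 := by linarith [h2 s hs]
    have hsq : ((n : ℝ) - 2) * deriv Φ s ^ 2 = 0 := by
      linear_combination deriv Φ s * h1 s hs - Φ s * hprod
    have hΦs : deriv Φ s = 0 := by simpa [hn2.ne'] using hsq
    refine ⟨hΦs, ?_⟩
    have h := h1 s hs
    simpa [hΦs, hΦ0 s hs] using h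
  refine ⟨key, fun s hs t ht => ⟨?_, ?_⟩⟩
  · exact isOpen_Ioo.is_const_of_deriv_eq_zero isPreconnected_Ioo (hdiff hΦ)
      (fun x hx => (key x hx).1) hs ht
  · exact isOpen_Ioo.is_const_of_deriv_eq_zero isPreconnected_Ioo (hdiff hF)
      (fun x hx => (key x hx).2) hs ht
end

section
/- Let n ≥ 2, let Ω ⊆ ℝⁿ be a convex open set, let ξ : Ω → ℝ be smooth, and let H : ℝ → ℝ be a differentiable function. Suppose that for all i ≠ j and all x ∈ Ω, ∂ᵢ∂ⱼξ(x) = H'(ξ(x))·∂ᵢξ(x)·∂ⱼξ(x). Then for each index i, the function x ↦ ∂ᵢξ(x)·exp(−H(ξ(x))) depends only on the i-th coordinate: for all x, y ∈ Ω with xᵢ = yᵢ, one has ∂ᵢξ(x)·exp(−H(ξ(x))) = ∂ᵢξ(y)·exp(−H(ξ(y))). (The separation step (19)–(20) in the proof of Theorem 1.1: ξ_{,i} = Gᵢ(xᵢ)·e^{∫F dξ}.) -/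
/-- A linear form on `ℝⁿ` that kills all coordinate vectors but the `i`-th kills every vector with
vanishing `i`-th coordinate. -/
lemma apply_eq_zero_of_coord_eq_zero {n : ℕ} (L : (Fin n → ℝ) →L[ℝ] ℝ) (i : Fin n)
    (hL : ∀ j, j ≠ i → L (Pi.single j 1) = 0) (v : Fin n → ℝ) (hv : v i = 0) : L v = 0 := by
  have hsum : v = ∑ j, v j • (Pi.single j 1 : Fin n → ℝ) := by
    ext k
    simp [Finset.sum_apply, Pi.single_apply]
  rw [hsum, map_sum]
  refine Finset.sum_eq_zero fun j _ => ?_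
  rw [map_smul]
  by_cases h : j = i
  · simp [h, hv]
  · simp [hL j h]

/-- The function `∂ᵢξ · exp (-H(ξ))` is differentiable at `z`, and its derivative vanishes in the
directions orthogonal to the `i`-th axis, provided `∂ⱼ∂ᵢξ = H'(ξ) · ∂ⱼξ · ∂ᵢξ` at `z` for all
`j ≠ i`. -/
lemma fderiv_separated_apply_eq_zero {n : ℕ} {ξ : (Fin n → ℝ) → ℝ} {z : Fin n → ℝ}
    (hξ : ContDiffAt ℝ 2 ξ z) {H : ℝ → ℝ} (hH : DifferentiableAt ℝ H (ξ z)) (i : Fin n)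
    (hrel : ∀ j, j ≠ i → pd j (pd i ξ) z = deriv H (ξ z) * pd j ξ z * pd i ξ z) :
    ∃ L : (Fin n → ℝ) →L[ℝ] ℝ,
      HasFDerivAt (fun w => pd i ξ w * Real.exp (-(H (ξ w)))) L z ∧
        ∀ v : Fin n → ℝ, v i = 0 → L v = 0 := by
  have hdξ : HasFDerivAt ξ (fderiv ℝ ξ z) z := (hξ.differentiableAt (by norm_num)).hasFDerivAt
  have hpd : DifferentiableAt ℝ (pd i ξ) z := by
    have h1 : DifferentiableAt ℝ (fderiv ℝ ξ) z :=
      (hξ.fderiv_right (m := 1) (by norm_num)).differentiableAt (by norm_num)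
    exact h1.clm_apply (differentiableAt_const _)
  have hE : HasFDerivAt (fun w => Real.exp (-(H (ξ w))))
      (Real.exp (-(H (ξ z))) • -(deriv H (ξ z) • fderiv ℝ ξ z)) z :=
    (hH.hasDerivAt.comp_hasFDerivAt z hdξ).neg.exp
  refine ⟨_, hpd.hasFDerivAt.mul hE, ?_⟩
  refine apply_eq_zero_of_coord_eq_zero _ i fun j hj => ?_
  have h : fderiv ℝ (pd i ξ) z (Pi.single j 1) =
      deriv H (ξ z) * fderiv ℝ ξ z (Pi.single j 1) * pd i ξ z := hrel j hj
  simp only [add_apply, smul_apply, neg_apply, smul_eq_mul, h]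
  ring

/-- **Separation step (19)–(20)** in the proof of Theorem 1.1: if
`ξ_{,ij} = H'(ξ)·ξ_{,i}·ξ_{,j}` for `i ≠ j`, then `ξ_{,i}·e^{−H(ξ)}` depends only on the
`i`-th coordinate. -/
theorem stmt_7 (n : ℕ) (hn : 2 ≤ n)
    (Ω : Set (Fin n → ℝ)) (hΩ : IsOpen Ω) (hconv : Convex ℝ Ω)
    (ξ : (Fin n → ℝ) → ℝ) (hξ : ContDiffOn ℝ (⊤ : ℕ∞) ξ Ω)
    (H : ℝ → ℝ) (hH : Differentiable ℝ H)
    (hrel : ∀ i j : Fin n, i ≠ j → ∀ x ∈ Ω,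
      pd i (pd j ξ) x = deriv H (ξ x) * pd i ξ x * pd j ξ x) :
    ∀ i : Fin n, ∀ x ∈ Ω, ∀ y ∈ Ω, x i = y i →
      pd i ξ x * Real.exp (-(H (ξ x))) = pd i ξ y * Real.exp (-(H (ξ y))) := by
  intro i x hx y hy hxy
  have hseg : ∀ t ∈ Set.Icc (0 : ℝ) 1, x + t • (y - x) ∈ Ω := fun t ht =>
    hconv.add_smul_sub_mem hx hy ht
  have hder : ∀ t ∈ Set.Icc (0 : ℝ) 1, HasDerivAt
      (fun s : ℝ => pd i ξ (x + s • (y - x)) * Real.exp (-(H (ξ (x + s • (y - x)))))) 0 t := by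
    intro t ht
    have hz := hseg t ht
    have hξz : ContDiffAt ℝ 2 ξ (x + t • (y - x)) :=
      (hξ.contDiffAt (hΩ.mem_nhds hz)).of_le (WithTop.coe_le_coe.mpr (le_top : (2 : ℕ∞) ≤ ⊤))
    obtain ⟨L, hL, hL0⟩ := fderiv_separated_apply_eq_zero hξz (hH _) i
      fun j hj => hrel j i hj _ hz
    have hline : HasDerivAt (fun s : ℝ => x + s • (y - x)) (y - x) t := by
      simpa using ((hasDerivAt_id t).smul_const (y - x)).const_add x
    have h := hL.comp_hasDerivAt t hline
    rwa [hL0 (y - x) (by simp [hxy])] at h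
  have hconst := constant_of_has_deriv_right_zero
    (fun t ht => (hder t ht).continuousAt.continuousWithinAt)
    (fun t ht => (hder t (Set.Ico_subset_Icc_self ht)).hasDerivWithinAt)
    1 (Set.right_mem_Icc.mpr zero_le_one)
  simpa using hconst.symm
end

section
/- Let n ≥ 3, let I ⊆ ℝ be a nonempty open interval, let τ, λ, Λ ∈ ℝ, and let Φ : I → ℝ be smooth and F : I → ℝ be constant. If Φ and F satisfy the reduced ODE system at every s ∈ I, then there exist constants b₁, b₂ ∈ ℝ with Φ(s) = b₁·s + b₂ for all s ∈ I, and moreover λ = (n−1)·b₁·(4τ·b₂ − b₁·Λ). (The claim that solitons with constant potential function have linear conformal factor, hence constant curvature.) -/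
/-- Solitons with constant potential function have linear conformal factor (hence constant
curvature): if `F` is constant and `(Φ, F)` solves the reduced ODE system on an interval,
then `Φ(s) = b₁ s + b₂` and `λ = (n−1)·b₁·(4τ b₂ − b₁ Λ)`. -/
theorem stmt_12 (n : ℕ) (hn : 3 ≤ n) (a b : ℝ) (hab : a < b)
    (τ lam Λ : ℝ)
    (Φ F : ℝ → ℝ) (hΦ : ContDiffOn ℝ (⊤ : ℕ∞) Φ (Set.Ioo a b))
    (c : ℝ) (hF : ∀ s, F s = c)
    (hODE : ∀ s ∈ Set.Ioo a b, ReducedODE n τ Λ lam Φ F s) :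
    ∃ b₁ b₂ : ℝ, (∀ s ∈ Set.Ioo a b, Φ s = b₁ * s + b₂) ∧
      lam = ((n : ℝ) - 1) * b₁ * (4 * τ * b₂ - b₁ * Λ) := by
  have hF' : deriv F = fun _ => 0 := by
    have : F = fun _ => c := funext hF
    rw [this]
    exact deriv_const' c
  have hn' : (n : ℝ) - 2 ≠ 0 := by
    have : (3 : ℝ) ≤ n := by exact_mod_cast hn
    linarith
  have hΦ'' : ∀ s ∈ Set.Ioo a b, deriv (deriv Φ) s = 0 := by
    intro s hs
    have h := (hODE s hs).1
    simpa [hF', hn'] using h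
  have hd : DifferentiableOn ℝ Φ (Set.Ioo a b) := hΦ.differentiableOn (by simp)
  have hd' : DifferentiableOn ℝ (deriv Φ) (Set.Ioo a b) :=
    ((contDiffOn_infty_iff_deriv_of_isOpen isOpen_Ioo).1 hΦ).2.differentiableOn (by simp)
  obtain ⟨b₁, hb₁⟩ := isOpen_Ioo.exists_is_const_of_deriv_eq_zero isPreconnected_Ioo hd'
    (fun s hs => hΦ'' s hs)
  obtain ⟨b₂, hb₂⟩ := isOpen_Ioo.exists_is_const_of_deriv_eq_zero
    (f := fun s => Φ s - b₁ * s) isPreconnected_Ioo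
    (hd.sub (by fun_prop)) (by
      intro s hs
      have h1 := (hd.differentiableAt (isOpen_Ioo.mem_nhds hs)).hasDerivAt
      have h2 := (h1.sub ((hasDerivAt_id s).const_mul b₁)).deriv
      rw [hb₁ s hs] at h2
      exact h2.trans (by simp))
  have hlin : ∀ s ∈ Set.Ioo a b, Φ s = b₁ * s + b₂ := fun s hs => by
    linarith [hb₂ s hs]
  refine ⟨b₁, b₂, hlin, ?_⟩
  have hm : (a + b) / 2 ∈ Set.Ioo a b := ⟨by linarith, by linarith⟩
  have h := (hODE _ hm).2
  rw [hΦ'' _ hm, hb₁ _ hm, hlin _ hm, hF'] at h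
  rw [← h]
  ring
end

section
/- Let n ≥ 2 and let I ⊆ ℝ be a nonempty open interval. Let Φ, F : I → ℝ be smooth with Φ(s) > 0 for all s ∈ I, satisfying both (n−2)Φ''(s) + Φ(s)F''(s) + 2Φ'(s)F'(s) = 0 and 2n·Φ''(s) + Φ(s)·F''(s) = 0 for all s ∈ I. Then the function s ↦ Φ(s)^{4n/(n+2)}·F'(s) is constant on I; equivalently, there exists c₁ ∈ ℝ with F'(s) = c₁·Φ(s)^{−4n/(n+2)} for all s ∈ I. (Equation (18) in the proof of Theorem 1.3.) -/
/-!
Eliminating `Φ''` between the two equations gives `(n + 2) Φ F'' + 4 n Φ' F' = 0`. With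
`p = 4n / (n + 2)` this says exactly that `(Φ ^ p * F')' = Φ ^ (p - 1) * (p Φ' F' + Φ F'')`
vanishes, so `Φ ^ p * F'` is constant on the (connected) interval.
-/

/-- **Equation (18)** in the proof of Theorem 1.3: under the constraint
`2nΦ'' + ΦF'' = 0`, the first reduced ODE integrates to `F' = c₁·Φ^{−4n/(n+2)}`. -/
theorem stmt_13 (n : ℕ) (hn : 2 ≤ n) (a b : ℝ) (hab : a < b)
    (Φ F : ℝ → ℝ)
    (hΦ : ContDiffOn ℝ (⊤ : ℕ∞) Φ (Set.Ioo a b)) (hF : ContDiffOn ℝ (⊤ : ℕ∞) F (Set.Ioo a b))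
    (hΦpos : ∀ s ∈ Set.Ioo a b, 0 < Φ s)
    (h1 : ∀ s ∈ Set.Ioo a b, ((n : ℝ) - 2) * deriv (deriv Φ) s
        + Φ s * deriv (deriv F) s + 2 * deriv Φ s * deriv F s = 0)
    (h2 : ∀ s ∈ Set.Ioo a b, 2 * (n : ℝ) * deriv (deriv Φ) s
        + Φ s * deriv (deriv F) s = 0) :
    (∀ s ∈ Set.Ioo a b, ∀ t ∈ Set.Ioo a b,
        (Φ s) ^ ((4 * (n : ℝ)) / ((n : ℝ) + 2)) * deriv F s
          = (Φ t) ^ ((4 * (n : ℝ)) / ((n : ℝ) + 2)) * deriv F t) ∧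
      ∃ c₁ : ℝ, ∀ s ∈ Set.Ioo a b,
        deriv F s = c₁ * (Φ s) ^ (-(4 * (n : ℝ)) / ((n : ℝ) + 2)) := by
  have hn2 : (n : ℝ) + 2 ≠ 0 := by positivity
  set p : ℝ := (4 * (n : ℝ)) / ((n : ℝ) + 2) with hp
  have hderiv : ∀ s ∈ Set.Ioo a b,
      HasDerivAt (fun x => (Φ x) ^ p * deriv F x) 0 s := by
    intro s hs
    have hpos := hΦpos s hs
    have hΦd : HasDerivAt Φ (deriv Φ s) s :=
      ((hΦ.differentiableOn (by simp)).differentiableAt (isOpen_Ioo.mem_nhds hs)).hasDerivAt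
    have hF1 : ContDiffOn ℝ (⊤ : ℕ∞) (deriv F) (Set.Ioo a b) :=
      hF.deriv_of_isOpen isOpen_Ioo le_rfl
    have hFd : HasDerivAt (deriv F) (deriv (deriv F) s) s :=
      ((hF1.differentiableOn (by simp)).differentiableAt (isOpen_Ioo.mem_nhds hs)).hasDerivAt
    have hode : p * deriv Φ s * deriv F s + Φ s * deriv (deriv F) s = 0 := by
      have hpn : p * ((n : ℝ) + 2) = 4 * n := by rw [hp]; field_simp
      apply mul_left_cancel₀ hn2
      linear_combination (deriv Φ s * deriv F s) * hpn + 2 * (n : ℝ) * h1 s hs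
        - ((n : ℝ) - 2) * h2 s hs
    have hpow : (Φ s) ^ p = (Φ s) ^ (p - 1) * Φ s := by
      rw [Real.rpow_sub_one hpos.ne', div_mul_cancel₀ _ hpos.ne']
    refine ((hΦd.rpow_const (p := p) (Or.inl hpos.ne')).mul hFd).congr_deriv ?_
    linear_combination (Φ s) ^ (p - 1) * hode + deriv (deriv F) s * hpow
  have hconst : ∀ s ∈ Set.Ioo a b, ∀ t ∈ Set.Ioo a b,
      (Φ s) ^ p * deriv F s = (Φ t) ^ p * deriv F t := by
    intro s hs t ht
    exact isOpen_Ioo.is_const_of_deriv_eq_zero isPreconnected_Ioo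
      (fun x hx => (hderiv x hx).differentiableAt.differentiableWithinAt)
      (fun x hx => (hderiv x hx).deriv) hs ht
  refine ⟨hconst, ?_⟩
  have hmid : (a + b) / 2 ∈ Set.Ioo a b := ⟨by linarith, by linarith⟩
  refine ⟨(Φ ((a + b) / 2)) ^ p * deriv F ((a + b) / 2), fun s hs => ?_⟩
  have hne : (Φ s) ^ p ≠ 0 := (Real.rpow_pos_of_pos (hΦpos s hs) p).ne'
  rw [← hconst s hs _ hmid, neg_div, ← hp, Real.rpow_neg (hΦpos s hs).le]
  field_simp
end

section
/- Let n ≥ 2, τ ≠ 0, λ, Λ ∈ ℝ, and let I ⊆ ℝ be a nonempty open interval on which 4τs + Λ is nowhere zero. Let Φ, F : I → ℝ be smooth with Φ(s) > 0 for all s ∈ I, and suppose Φ, F satisfy the reduced ODE system at every s ∈ I together with the constraint 2n·Φ''(s) + Φ(s)·F''(s) = 0. Then there exist constants c₁, c₂ ∈ ℝ such that, setting h = Φ², one has F'(s) = c₁·h(s)^{−2n/(n+2)} and (n−1)·h'(s) + c₁·h(s)^{−(n−2)/(n+2)} = c₂·(4τs + Λ) + λ/(2τ) for all s ∈ I. (Theorem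 1.3, forward direction.) -/
theorem exists_const_of_hasDerivAt_zero {a b : ℝ} {g : ℝ → ℝ}
    (hg : ∀ s ∈ Set.Ioo a b, HasDerivAt g 0 s) : ∃ c, ∀ s ∈ Set.Ioo a b, g s = c :=
  isOpen_Ioo.exists_is_const_of_deriv_eq_zero isPreconnected_Ioo
    (fun s hs => (hg s hs).differentiableAt.differentiableWithinAt)
    (fun s hs => (hg s hs).deriv)

/-- A smooth function on an open interval is twice differentiable there, in terms of the global
`deriv`, which agrees with the derivative within the interval. -/
theorem hasDerivAt_two_of_smooth {a b : ℝ} {f : ℝ → ℝ}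
    (hf : ContDiffOn ℝ (⊤ : ℕ∞) f (Set.Ioo a b)) {s : ℝ} (hs : s ∈ Set.Ioo a b) :
    HasDerivAt f (deriv f s) s ∧ HasDerivAt (deriv f) (deriv (deriv f) s) s := by
  have hd : ContDiffOn ℝ 1 (deriv f) (Set.Ioo a b) :=
    hf.deriv_of_isOpen isOpen_Ioo (by norm_cast)
  have hmem := isOpen_Ioo.mem_nhds hs
  exact ⟨((hf.differentiableOn (by simp)).differentiableAt hmem).hasDerivAt,
    ((hd.differentiableOn (by simp)).differentiableAt hmem).hasDerivAt⟩

/-- **Theorem 1.3, forward direction.** A solution of the reduced ODE system satisfying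
the constraint `2nΦ'' + ΦF'' = 0` satisfies, with `h = Φ²`:
`F' = c₁·h^{−2n/(n+2)}` and `(n−1)h' + c₁·h^{−(n−2)/(n+2)} = c₂(4τs+Λ) + λ/(2τ)`. -/
theorem stmt_16 (n : ℕ) (hn : 2 ≤ n) (τ lam Λ : ℝ) (hτ : τ ≠ 0)
    (a b : ℝ) (hab : a < b)
    (hT : ∀ s ∈ Set.Ioo a b, 4 * τ * s + Λ ≠ 0)
    (Φ F : ℝ → ℝ)
    (hΦ : ContDiffOn ℝ (⊤ : ℕ∞) Φ (Set.Ioo a b)) (hF : ContDiffOn ℝ (⊤ : ℕ∞) F (Set.Ioo a b))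
    (hΦpos : ∀ s ∈ Set.Ioo a b, 0 < Φ s)
    (hODE : ∀ s ∈ Set.Ioo a b, ReducedODE n τ Λ lam Φ F s)
    (hcon : ∀ s ∈ Set.Ioo a b, 2 * (n : ℝ) * deriv (deriv Φ) s
        + Φ s * deriv (deriv F) s = 0) :
    ∃ c₁ c₂ : ℝ, ∀ s ∈ Set.Ioo a b,
      deriv F s = c₁ * ((Φ s) ^ 2) ^ (-(2 * (n : ℝ)) / ((n : ℝ) + 2)) ∧
      ((n : ℝ) - 1) * deriv (fun t => (Φ t) ^ 2) s
          + c₁ * ((Φ s) ^ 2) ^ (-(((n : ℝ) - 2)) / ((n : ℝ) + 2))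
        = c₂ * (4 * τ * s + Λ) + lam / (2 * τ) := by
  have hn2 : (0 : ℝ) < (n : ℝ) + 2 := by positivity
  obtain ⟨c₁, hc₁⟩ : ∃ c, ∀ s ∈ Set.Ioo a b,
      deriv F s * ((Φ s) ^ 2) ^ (2 * (n : ℝ) / ((n : ℝ) + 2)) = c := by
    refine exists_const_of_hasDerivAt_zero fun s hs => ?_
    obtain ⟨dΦ, -⟩ := hasDerivAt_two_of_smooth hΦ hs
    obtain ⟨-, dF'⟩ := hasDerivAt_two_of_smooth hF hs
    have hpos := hΦpos s hs
    have hh : 0 < (Φ s) ^ 2 := by positivity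
    have h1 := (hODE s hs).1
    have h2 := hcon s hs
    refine (dF'.fun_mul ((dΦ.fun_pow 2).rpow_const (p := 2 * (n : ℝ) / ((n : ℝ) + 2))
      (Or.inl hh.ne'))).congr_deriv ?_
    have key : ((n : ℝ) + 2) * (Φ s * deriv (deriv F) s)
        + 4 * n * (deriv Φ s * deriv F s) = 0 := by
      linear_combination 2 * (n : ℝ) * h1 - ((n : ℝ) - 2) * h2
    rw [Real.rpow_sub_one hh.ne']
    field_simp
    push_cast
    linear_combination ((Φ s) ^ 2) ^ (2 * (n : ℝ) / ((n : ℝ) + 2)) * Φ s * key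
  obtain ⟨c₂, hc₂⟩ : ∃ c, ∀ s ∈ Set.Ioo a b,
      (((n : ℝ) - 1) * (2 * (Φ s * deriv Φ s)) + (Φ s * Φ s) * deriv F s - lam / (2 * τ))
        / (4 * τ * s + Λ) = c := by
    refine exists_const_of_hasDerivAt_zero fun s hs => ?_
    obtain ⟨dΦ, dΦ'⟩ := hasDerivAt_two_of_smooth hΦ hs
    obtain ⟨-, dF'⟩ := hasDerivAt_two_of_smooth hF hs
    have h2 := hcon s hs
    have h3 := (hODE s hs).2
    have hTs := hT s hs
    have dG := ((((dΦ.fun_mul dΦ').const_mul 2).const_mul ((n : ℝ) - 1)).fun_add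
      ((dΦ.fun_mul dΦ).fun_mul dF')).sub_const (lam / (2 * τ))
    have dT := ((hasDerivAt_id s).const_mul (4 * τ)).add_const Λ
    refine (dG.fun_div dT hTs).congr_deriv ?_
    rw [div_eq_zero_iff]
    left
    simp only [id]
    field_simp
    linear_combination 2 * (4 * τ * s + Λ) * Φ s * h2 - 4 * h3
  refine ⟨c₁, c₂, fun s hs => ?_⟩
  have hpos := hΦpos s hs
  have hh : 0 < (Φ s) ^ 2 := by positivity
  have e1 : deriv F s = c₁ * ((Φ s) ^ 2) ^ (-(2 * (n : ℝ)) / ((n : ℝ) + 2)) := by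
    rw [← hc₁ s hs, mul_assoc, ← Real.rpow_add hh, neg_div, add_neg_cancel, Real.rpow_zero,
      mul_one]
  refine ⟨e1, ?_⟩
  have hexp : -((n : ℝ) - 2) / ((n : ℝ) + 2) = 1 + -(2 * (n : ℝ)) / ((n : ℝ) + 2) := by
    field_simp
    ring
  have e2 : c₁ * ((Φ s) ^ 2) ^ (-((n : ℝ) - 2) / ((n : ℝ) + 2)) = (Φ s) ^ 2 * deriv F s := by
    rw [hexp, Real.rpow_add hh, Real.rpow_one, e1]
    ring
  have e3 : deriv (fun t => (Φ t) ^ 2) s = 2 * (Φ s * deriv Φ s) := by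
    have := ((hasDerivAt_two_of_smooth hΦ hs).1.fun_pow 2).deriv
    rw [this]
    push_cast
    ring
  have h := hc₂ s hs
  rw [div_eq_iff (hT s hs)] at h
  rw [e2, e3]
  linear_combination h
end
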